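/- For every ε > 0 there exists N such that for all n ≥ N there exists a DFA M with exactly n states over a two-letter alphabet such that M has a universal length and its minimal universality length is at least exp((1 − ε)·√(n·log n)). -/

import Mathlib

/-- `ℓ` is a universal length for the language `L`: every word of length `ℓ` belongs to `L`. -/
def IsUnivLength {α : Type*} (L : Language α) (ℓ : ℕ) : Prop :=
  ∀ w : List α, w.length = ℓ → w ∈ L

/-!
Let `p₁, …, pₖ` be pairwise coprime. An automaton walking along a chain of `k` states can leave the
`i`-th of them for a cycle of length `pᵢ`, so that a word of length `ℓ ≥ k` may end up in any of
the cycles, at a position that depends only on `ℓ`. If one position of each cycle accepts, the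
universal lengths are the common multiples `ℓ ≥ k` of the `pᵢ`, hence at least `∏ pᵢ`, while the
automaton has only `k + ∑ pᵢ` states. Take for the `pᵢ` all primes up to `N = c √(n log n)` with
`c < 1`. By the prime number theorem `∑ (pᵢ + 1) ∼ N² / (2 log N)`, which is eventually at most `n`,
and `∏ pᵢ = exp (θ N)` with `θ N ∼ N`.

The prime number theorem in the form `θ x ∼ x` comes from the Wiener–Ikehara theorem: the
logarithmic derivative of `ζ` extends continuously to `1 ≤ re s` apart from its pole at `1`, so the
Laplace transform of `ψ (exp u) / exp u - 1` has continuous boundary values. By the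
Riemann–Lebesgue lemma the averages of `a u = ψ (exp u) / exp u` against translates of a kernel with
compact spectrum converge to `1`, and as `a u * exp u` is monotone, the averages against a kernel
concentrated near `y` control `a y`.
-/

section Automaton

open Finset

/-- States of `chainCycleDFA`: a chain of `k` states, a cycle of length `p i` attached to the `i`-th
state of the chain, and `d` unreachable states that only pad the total number of states. -/
abbrev ChainCycleState {k : ℕ} (p : Fin k → ℕ) (d : ℕ) : Type :=
  Fin k ⊕ (Σ i, ZMod (p i)) ⊕ Fin d

namespace ChainCycleState

variable {k : ℕ} {p : Fin k → ℕ} {d : ℕ}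

/-- The state `j` of the chain. -/
abbrev chain (j : Fin k) : ChainCycleState p d := .inl j

/-- The state of the `i`-th cycle at position `c`. -/
abbrev cycle (i : Fin k) (c : ZMod (p i)) : ChainCycleState p d := .inr (.inl ⟨i, c⟩)

lemma card (p : Fin k → ℕ) [∀ i, NeZero (p i)] (d : ℕ) :
    Fintype.card (ChainCycleState p d) = k + ∑ i, p i + d := by
  simp [ZMod.card, add_assoc]

end ChainCycleState

open ChainCycleState

/-- The automaton that walks along a chain while it reads `true`, leaves state `j` of the chain for
the `j`-th cycle when it reads `false` or the chain ends, and then goes round that cycle forever.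
Positions on the cycles are aligned so that a cycle is always occupied at the position given by the
number of letters read so far; the accepting states are those at position `0`. -/
def chainCycleDFA {k : ℕ} [NeZero k] (p : Fin k → ℕ) (d : ℕ) : DFA Bool (ChainCycleState p d) where
  step
    | .inl j, b => if h : b = true ∧ (j : ℕ) + 1 < k then chain ⟨j + 1, h.2⟩ else cycle j (j + 1)
    | .inr (.inl ⟨i, c⟩), _ => cycle i (c + 1)
    | .inr (.inr x), _ => .inr (.inr x)
  start := chain 0
  accept := Set.range fun i ↦ cycle i 0

namespace chainCycleDFA

variable {k : ℕ} [NeZero k] {p : Fin k → ℕ} {d : ℕ}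

lemma step_chain_true {j : ℕ} (hj : j + 1 < k) :
    (chainCycleDFA p d).step (chain ⟨j, by lia⟩) true = chain ⟨j + 1, hj⟩ :=
  dif_pos ⟨rfl, hj⟩

lemma step_chain_of_not {j : Fin k} {b : Bool} (h : ¬(b = true ∧ (j : ℕ) + 1 < k)) :
    (chainCycleDFA p d).step (chain j) b = cycle j ((j : ℕ) + 1 : ℕ) := by
  simp [chainCycleDFA, h]

lemma step_cycle (i : Fin k) (t : ℕ) (b : Bool) :
    (chainCycleDFA p d).step (cycle i t) b = cycle i (t + 1 : ℕ) := by
  simp [chainCycleDFA]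

lemma eval_eq_chain_or_cycle (w : List Bool) :
    (∃ h : w.length < k, (chainCycleDFA p d).eval w = chain ⟨w.length, h⟩) ∨
      ∃ i, (chainCycleDFA p d).eval w = cycle i w.length := by
  induction w using List.reverseRecOn with
  | nil => exact .inl ⟨NeZero.pos k, rfl⟩
  | append_singleton w b ih =>
    rw [DFA.eval_append_singleton, List.length_append, List.length_singleton]
    obtain ⟨h, hw⟩ | ⟨i, hw⟩ := ih <;> rw [hw]
    · by_cases hb : b = true ∧ w.length + 1 < k
      · obtain ⟨rfl, hlt⟩ := hb
        exact .inl ⟨hlt, step_chain_true hlt⟩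
      · exact .inr ⟨_, step_chain_of_not hb⟩
    · exact .inr ⟨i, step_cycle i _ b⟩

lemma eval_replicate_true {j : ℕ} (hj : j < k) :
    (chainCycleDFA p d).eval (.replicate j true) = chain ⟨j, hj⟩ := by
  induction j with
  | zero => rfl
  | succ j ih =>
    rw [List.replicate_succ', DFA.eval_append_singleton, ih (by lia), step_chain_true hj]

lemma eval_replicate_true_append_replicate_false (i : Fin k) (m : ℕ) :
    (chainCycleDFA p d).eval (.replicate i true ++ .replicate (m + 1) false) =
      cycle i (i + m + 1 : ℕ) := by
  induction m with
  | zero =>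
    rw [zero_add, List.replicate_one, DFA.eval_append_singleton, eval_replicate_true i.2,
      step_chain_of_not (by simp), add_zero]
  | succ m ih =>
    rw [List.replicate_succ', ← List.append_assoc, DFA.eval_append_singleton, ih, step_cycle]
    rfl

lemma chain_notMem_accept (j : Fin k) : chain j ∉ (chainCycleDFA p d).accept := by
  simp [chainCycleDFA]

lemma cycle_mem_accept {i : Fin k} {t : ℕ} :
    cycle i t ∈ (chainCycleDFA p d).accept ↔ p i ∣ t := by
  rw [← ZMod.natCast_eq_zero_iff]
  simp [chainCycleDFA, Sigma.ext_iff, eq_comm]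

theorem isUnivLength_iff {l : ℕ} :
    IsUnivLength (chainCycleDFA p d).accepts l ↔ k ≤ l ∧ ∀ i, p i ∣ l := by
  refine ⟨fun hl ↦ ?_, fun ⟨hkl, hdvd⟩ w hw ↦ ?_⟩
  · have hkl : k ≤ l := by
      by_contra! h
      refine chain_notMem_accept (p := p) (d := d) ⟨l, h⟩ ?_
      rw [← eval_replicate_true h, ← DFA.mem_accepts]
      exact hl _ List.length_replicate
    refine ⟨hkl, fun i ↦ ?_⟩
    obtain ⟨m, rfl⟩ : ∃ m, l = i + m + 1 := ⟨l - i - 1, by lia⟩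
    rw [← cycle_mem_accept (d := d), ← eval_replicate_true_append_replicate_false,
      ← DFA.mem_accepts]
    exact hl _ (by simp [add_assoc])
  · rw [DFA.mem_accepts]
    obtain ⟨h, -⟩ | ⟨i, hi⟩ := eval_eq_chain_or_cycle (p := p) (d := d) w
    · exact absurd (hw ▸ h) hkl.not_gt
    · rw [hi, hw, cycle_mem_accept]
      exact hdvd i

end chainCycleDFA

theorem exists_dfa_finsetProd_le_sInf_isUnivLength {s : Finset ℕ} (hs : s.Nonempty)
    (hpos : 0 ∉ s) (hcop : (s : Set ℕ).Pairwise Nat.Coprime) {n : ℕ} (hn : ∑ p ∈ s, (p + 1) ≤ n) :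
    ∃ (Q : Type) (inst : Fintype Q), @Fintype.card Q inst = n ∧
      ∃ M : DFA Bool Q, (∃ ℓ, IsUnivLength M.accepts ℓ) ∧
        ∏ p ∈ s, p ≤ sInf {ℓ | IsUnivLength M.accepts ℓ} := by
  set k := #s
  have e : Fin k ≃ s := s.equivFin.symm
  let p (i : Fin k) : ℕ := e i
  have : NeZero k := ⟨hs.card_ne_zero⟩
  have (i : Fin k) : NeZero (p i) := ⟨fun h ↦ hpos (h ▸ (e i).2)⟩
  have hsum : ∑ i, p i = ∑ q ∈ s, q := by
    rw [← sum_coe_sort s]; exact e.sum_comp (fun q : s ↦ (q : ℕ))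
  have hprod : ∏ i, p i = ∏ q ∈ s, q := by
    rw [← prod_coe_sort s]; exact e.prod_comp (fun q : s ↦ (q : ℕ))
  have hp : Pairwise fun i j ↦ IsRelPrime (p i) (p j) := fun i j hij ↦
    Nat.coprime_iff_isRelPrime.1 <|
    hcop (e i).2 (e j).2 fun h ↦ hij (e.injective (Subtype.ext h))
  let M := chainCycleDFA p (n - ∑ q ∈ s, (q + 1))
  have hM : ∃ ℓ, IsUnivLength M.accepts ℓ := by
    refine ⟨k * ∏ i, p i, chainCycleDFA.isUnivLength_iff.2 ⟨?_, fun i ↦ ?_⟩⟩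
    · exact Nat.le_mul_of_pos_right k (prod_pos fun i _ ↦ NeZero.pos (p i))
    · exact (dvd_prod_of_mem p (mem_univ i)).mul_left k
  refine ⟨_, inferInstance, ?_, M, hM, ?_⟩
  · rw [ChainCycleState.card, hsum]
    simp only [sum_add_distrib, sum_const, smul_eq_mul, mul_one] at hn ⊢
    lia
  · obtain ⟨hk, hdvd⟩ := chainCycleDFA.isUnivLength_iff.1 (Nat.sInf_mem hM)
    rw [← hprod]
    exact Nat.le_of_dvd ((NeZero.pos k).trans_le hk) (Fintype.prod_dvd_of_isRelPrime hp hdvd)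

end Automaton

section WienerIkehara

open MeasureTheory Filter Topology Set FourierTransform Convolution
open scoped ComplexConjugate

/-- Nonnegative functions of total mass `1` on the real line whose spectrum is compact, in the sense
that they are Fourier transforms of continuous functions of compact support. They are the test
functions in the proof of the Wiener–Ikehara theorem. -/
structure IsBandlimitedKernel (k : ℝ → ℝ) : Prop where
  nonneg : 0 ≤ k
  integrable : Integrable k
  integral_eq_one : ∫ x, k x = 1
  exists_fourier_eq : ∃ φ : ℝ → ℂ, Continuous φ ∧ HasCompactSupport φ ∧ ∀ x, 𝓕 φ x = k x

lemma conj_fourier_ofReal_of_even {g : ℝ → ℝ} (hg : g.Even) (x : ℝ) :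
    conj (𝓕 (fun t ↦ (g t : ℂ)) x) = 𝓕 (fun t ↦ (g t : ℂ)) x := by
  rw [Real.fourier_real_eq_integral_exp_smul, ← integral_conj,
    ← integral_neg_eq_self]
  congr with t
  simp only [smul_eq_mul, map_mul, Complex.conj_ofReal, hg t, ← Complex.exp_conj, Complex.conj_I]
  push_cast
  ring_nf

lemma exists_schwartzMap_fourier_eq_ofReal : ∃ (g : SchwartzMap ℝ ℂ) (h : ℝ → ℝ),
    HasCompactSupport g ∧ (∀ x, 𝓕 (g : ℝ → ℂ) x = h x) ∧ h 0 ≠ 0 := by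
  let η : ContDiffBump (0 : ℝ) := default
  have hη : HasCompactSupport fun t ↦ (η t : ℂ) := η.hasCompactSupport.comp_left Complex.ofReal_zero
  refine ⟨hη.toSchwartzMap (Complex.ofRealCLM.contDiff.comp η.contDiff),
    fun x ↦ (𝓕 (fun t ↦ (η t : ℂ)) x).re, hη, fun x ↦ ?_, ?_⟩
  · exact (Complex.conj_eq_iff_re.1 (conj_fourier_ofReal_of_even η.neg x)).symm
  · simp only [Real.fourier_real_eq_integral_exp_smul]
    simp [integral_complex_ofReal, η.integral_pos.ne']

-- If `h` is the transform of `g`, then `h ^ 2` is the transform of the convolution `g ⋆ g`.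
theorem exists_isBandlimitedKernel : ∃ k, IsBandlimitedKernel k := by
  obtain ⟨g, h, hg, hgh, h0⟩ := exists_schwartzMap_fourier_eq_ofReal
  have hh (x : ℝ) : h x = (𝓕 g x).re := by rw [SchwartzMap.fourier_coe, hgh, Complex.ofReal_re]
  have hint : Integrable fun x ↦ h x ^ 2 := by
    simp only [hh]
    exact ((𝓕 g).memLp 2).re.integrable_sq
  have hcont : Continuous h := by
    simp only [funext hh]
    exact Complex.continuous_re.comp (𝓕 g).continuous
  have hpos : 0 < ∫ x, h x ^ 2 := integral_pos_of_integrable_nonneg_nonzero (hcont.pow 2) hint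
    (fun _ ↦ sq_nonneg _) (pow_ne_zero 2 h0)
  set c := ∫ x, h x ^ 2
  let φ := (c : ℂ)⁻¹ • (g ⋆[.mul ℂ ℂ] g)
  refine ⟨fun x ↦ c⁻¹ * h x ^ 2, fun x ↦ by positivity, hint.const_mul _, ?_, φ, ?_, ?_, fun x ↦ ?_⟩
  · rw [integral_const_mul, inv_mul_cancel₀ hpos.ne']
  · exact (hg.continuous_convolution_left _ g.continuous
      g.integrable.locallyIntegrable).const_smul _
  · exact (hg.convolution _ hg).smul_left (f := fun _ ↦ (c : ℂ)⁻¹)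
  · calc 𝓕 φ x = (c : ℂ)⁻¹ * 𝓕 (g ⋆[.mul ℂ ℂ] g) x :=
          congrFun (VectorFourier.fourierIntegral_const_smul 𝐞 volume (innerₗ ℝ) _ _) x
      _ = (c⁻¹ * h x ^ 2 : ℝ) := by
          rw [Real.fourier_mul_convolution_eq g.integrable g.integrable, hgh, ← sq]
          norm_cast

namespace IsBandlimitedKernel

variable {k : ℝ → ℝ}

lemma comp_mul_left (hk : IsBandlimitedKernel k) {l : ℝ} (hl : 0 < l) :
    IsBandlimitedKernel fun x ↦ l * k (l * x) := by
  obtain ⟨φ, hφc, hφs, hφ⟩ := hk.exists_fourier_eq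
  refine ⟨fun x ↦ mul_nonneg hl.le (hk.nonneg _), (hk.integrable.comp_mul_left' hl.ne').const_mul l,
    ?_, fun t ↦ φ (l⁻¹ * t), by fun_prop, ?_, fun x ↦ ?_⟩
  · rw [integral_const_mul, Measure.integral_comp_mul_left, hk.integral_eq_one, abs_inv,
      abs_of_pos hl, smul_eq_mul, mul_one, mul_inv_cancel₀ hl.ne']
  · exact hφs.comp_homeomorph (Homeomorph.mulLeft₀ l⁻¹ (inv_ne_zero hl.ne'))
  · have h := Measure.integral_comp_mul_left
      (fun t ↦ 𝐞 (-(t * (l * x))) • φ t) l⁻¹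
    rw [inv_inv, abs_of_pos hl, ← Real.fourier_real_eq, hφ] at h
    rw [Real.fourier_real_eq, Complex.ofReal_mul, ← Complex.real_smul, ← h]
    congr with t
    rw [mul_mul_mul_comm, inv_mul_cancel₀ hl.ne', one_mul]

theorem exists_concentrated {δ ε : ℝ} (hδ : 0 < δ) (hε : 0 < ε) :
    ∃ k, IsBandlimitedKernel k ∧ 1 - ε ≤ ∫ x in Ioc (-δ) δ, k x := by
  obtain ⟨k, hk⟩ := exists_isBandlimitedKernel
  have hlim : Tendsto (fun l : ℝ ↦ ∫ x in l * -δ..l * δ, k x) atTop (𝓝 1) :=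
    hk.integral_eq_one ▸ intervalIntegral_tendsto_integral hk.integrable
      (tendsto_id.atTop_mul_const_of_neg (by simpa)) (tendsto_id.atTop_mul_const hδ)
  obtain ⟨l, hmass, hl⟩ :=
    ((hlim.eventually_const_le (sub_lt_self 1 hε)).and (eventually_gt_atTop 0)).exists
  refine ⟨_, hk.comp_mul_left hl, ?_⟩
  rwa [← intervalIntegral.integral_of_le (by linarith), intervalIntegral.integral_const_mul,
    intervalIntegral.mul_integral_comp_mul_left]

end IsBandlimitedKernel

section BoundaryValue

variable {b : ℝ → ℂ} {C : ℝ} {G : ℂ → ℂ} {φ : ℝ → ℂ}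

lemma integrableOn_Ioi_mul_exp_neg (hb : AEStronglyMeasurable b) (hC : ∀ u, ‖b u‖ ≤ C) {σ : ℝ}
    (hσ : 0 < σ) : IntegrableOn (fun u ↦ b u * Real.exp (-σ * u)) (Ioi 0) :=
  (exp_neg_integrableOn_Ioi 0 hσ).ofReal.bdd_mul hb.restrict (ae_of_all _ hC)

lemma integral_fourier_mul_exp_neg (hb : AEStronglyMeasurable b) (hC : ∀ u, ‖b u‖ ≤ C)
    (hφ : Integrable φ) {σ : ℝ} (hσ : 0 < σ) :
    ∫ u in Ioi 0, 𝓕 φ u * (b u * Real.exp (-σ * u)) =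
      ∫ t, φ t * ∫ u in Ioi (0 : ℝ),
        b u * Complex.exp (-(σ + (2 * Real.pi * t : ℝ) * Complex.I) * u) := by
  have := VectorFourier.integral_fourierIntegral_smul_eq_flip (L := innerₗ ℝ)
    Real.continuous_fourierChar continuous_inner hφ (integrableOn_Ioi_mul_exp_neg hb hC hσ)
  refine this.trans (integral_congr_ae <| .of_forall fun t ↦ ?_)
  simp only [VectorFourier.fourierIntegral, smul_eq_mul, flip_innerₗ]
  congr 1
  refine integral_congr_ae <| .of_forall fun u ↦ ?_
  simp only [innerₗ_apply_apply, Real.inner_apply, Circle.smul_def, Real.fourierChar_apply,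
    smul_eq_mul]
  rw [mul_left_comm, Complex.ofReal_exp, ← Complex.exp_add]
  push_cast
  ring_nf

lemma tendsto_integral_mul_exp_neg {f : ℝ → ℂ} (hf : IntegrableOn f (Ioi 0)) :
    Tendsto (fun σ : ℝ ↦ ∫ u in Ioi 0, f u * Real.exp (-σ * u)) (𝓝[>] 0)
      (𝓝 (∫ u in Ioi 0, f u)) := by
  refine tendsto_integral_filter_of_dominated_convergence (fun u ↦ ‖f u‖) ?_ ?_ hf.norm ?_
  · exact .of_forall fun σ ↦ hf.aestronglyMeasurable.mul (by fun_prop)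
  · filter_upwards [self_mem_nhdsWithin] with σ (hσ : 0 < σ)
    filter_upwards [ae_restrict_mem measurableSet_Ioi] with u (hu : 0 < u)
    have hexp : Real.exp (-σ * u) ≤ 1 := Real.exp_le_one_iff.2 (by nlinarith)
    rw [norm_mul, Complex.norm_real, Real.norm_of_nonneg (Real.exp_nonneg _)]
    exact mul_le_of_le_one_right (norm_nonneg _) hexp
  · refine .of_forall fun u ↦ tendsto_nhdsWithin_of_tendsto_nhds ?_
    have : Continuous fun σ : ℝ ↦ f u * Real.exp (-σ * u) := by fun_prop
    simpa using this.tendsto 0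

theorem integral_fourier_mul_eq (hb : AEStronglyMeasurable b) (hC : ∀ u, ‖b u‖ ≤ C)
    (hG : ContinuousOn G {z | 0 ≤ z.re})
    (hL : ∀ z : ℂ, 0 < z.re → ∫ u in Ioi (0 : ℝ), b u * Complex.exp (-z * u) = G z)
    (hφ : Continuous φ) (hsupp : HasCompactSupport φ) (hint : Integrable (𝓕 φ)) :
    ∫ u in Ioi 0, 𝓕 φ u * b u = ∫ t : ℝ, φ t * G ((2 * Real.pi * t : ℝ) * Complex.I) := by
  have hleft : Tendsto (fun σ : ℝ ↦ ∫ u in Ioi 0, 𝓕 φ u * (b u * Real.exp (-σ * u))) (𝓝[>] 0)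
      (𝓝 (∫ u in Ioi 0, 𝓕 φ u * b u)) := by
    simpa only [mul_assoc] using
      tendsto_integral_mul_exp_neg (hint.mul_bdd hb (ae_of_all _ hC)).integrableOn
  have hright : Tendsto (fun σ : ℝ ↦ ∫ t, φ t * G (σ + (2 * Real.pi * t : ℝ) * Complex.I)) (𝓝[>] 0)
      (𝓝 (∫ t, φ t * G ((2 * Real.pi * t : ℝ) * Complex.I))) := by
    have hcont : ContinuousOn
        (fun σ : ℝ ↦ ∫ t, φ t * G (σ + (2 * Real.pi * t : ℝ) * Complex.I)) (Ici 0) := by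
      refine continuousOn_integral_of_compact_support hsupp.isCompact ?_ fun σ t _ ht ↦ ?_
      · refine ContinuousOn.mul (by fun_prop) (hG.comp (by fun_prop) fun p hp ↦ ?_)
        simpa using hp
      · rw [image_eq_zero_of_notMem_tsupport ht, zero_mul]
    simpa using (hcont 0 self_mem_Ici).mono_left (nhdsWithin_mono _ Ioi_subset_Ici_self)
  refine tendsto_nhds_unique (hleft.congr' ?_) hright
  filter_upwards [self_mem_nhdsWithin] with σ (hσ : 0 < σ)
  rw [integral_fourier_mul_exp_neg hb hC (hφ.integrable_of_hasCompactSupport hsupp) hσ]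
  congr with t
  rw [hL _ (by simpa)]

lemma fourier_fourierChar_smul (φ : ℝ → ℂ) (y : ℝ) :
    𝓕 (fun t ↦ 𝐞 (t * y) • φ t) = fun x ↦ 𝓕 φ (x - y) := by
  ext x
  simp only [Real.fourier_real_eq, smul_smul, ← AddChar.map_add_eq_mul]
  congr with t
  ring_nf

theorem tendsto_integral_fourier_sub_mul (hb : AEStronglyMeasurable b) (hC : ∀ u, ‖b u‖ ≤ C)
    (hG : ContinuousOn G {z | 0 ≤ z.re})
    (hL : ∀ z : ℂ, 0 < z.re → ∫ u in Ioi (0 : ℝ), b u * Complex.exp (-z * u) = G z)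
    (hφ : Continuous φ) (hsupp : HasCompactSupport φ) (hint : Integrable (𝓕 φ)) :
    Tendsto (fun y ↦ ∫ u in Ioi 0, 𝓕 φ (u - y) * b u) atTop (𝓝 0) := by
  have hRL := (Real.tendsto_integral_exp_smul_cocompact
    fun t : ℝ ↦ φ t * G ((2 * Real.pi * t : ℝ) * Complex.I)).comp
      (tendsto_neg_atTop_atBot.mono_right atBot_le_cocompact)
  refine hRL.congr fun y ↦ ?_
  have hmod := fourier_fourierChar_smul φ y
  have := integral_fourier_mul_eq hb hC hG hL (φ := fun t ↦ 𝐞 (t * y) • φ t) (by fun_prop)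
    hsupp.smul_left (hmod ▸ hint.comp_sub_right y)
  simp only [hmod] at this
  simp only [this, Function.comp_apply, mul_neg, neg_neg, Circle.smul_def, smul_eq_mul, mul_assoc]

end BoundaryValue

section Tauberian

variable {a : ℝ → ℝ} {A C : ℝ}

lemma measurable_of_monotone_mul_exp (hmono : Monotone fun u ↦ a u * Real.exp u) :
    Measurable a := by
  have : a = fun u ↦ a u * Real.exp u * Real.exp (-u) := by
    ext u
    rw [mul_assoc, ← Real.exp_add, add_neg_cancel, Real.exp_zero, mul_one]
  rw [this]
  exact hmono.measurable.mul (by fun_prop)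

lemma le_mul_exp_sub_of_monotone_mul_exp (hmono : Monotone fun u ↦ a u * Real.exp u) {u v : ℝ}
    (huv : u ≤ v) : a u ≤ a v * Real.exp (v - u) := by
  rw [Real.exp_sub, ← mul_div_assoc, le_div_iff₀ (Real.exp_pos u)]
  exact hmono huv

lemma integral_comp_sub_mul_eq (k a : ℝ → ℝ) (y : ℝ) :
    ∫ u, k (u - y) * a u = ∫ x, k x * a (x + y) := by
  rw [← integral_sub_right_eq_self (fun x ↦ k x * a (x + y)) y]
  simp only [sub_add_cancel]

lemma integrable_mul_comp_add {k : ℝ → ℝ} (hk : Integrable k) (h0 : ∀ u, 0 ≤ a u)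
    (hC : ∀ u, a u ≤ C) (hmono : Monotone fun u ↦ a u * Real.exp u) (y : ℝ) :
    Integrable fun x ↦ k x * a (x + y) := by
  refine hk.mul_bdd (c := C) ?_ (ae_of_all _ fun x ↦ ?_)
  · exact ((measurable_of_monotone_mul_exp hmono).comp
      (measurable_add_const y)).aestronglyMeasurable
  · rw [Real.norm_of_nonneg (h0 _)]
    exact hC _

namespace IsBandlimitedKernel

variable {k : ℝ → ℝ}

-- The kernel is centred at `y + δ` because monotonicity of `a u * exp u` bounds `a` from below only
-- to the right of `y`; dually, the upper bound below centres it at `y - δ`.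
lemma mul_exp_mul_le_integral (hk : IsBandlimitedKernel k) (h0 : ∀ u, 0 ≤ a u)
    (hC : ∀ u, a u ≤ C) (hmono : Monotone fun u ↦ a u * Real.exp u) (δ y : ℝ) :
    a y * Real.exp (-(2 * δ)) * ∫ x in Ioc (-δ) δ, k x ≤ ∫ u, k (u - (y + δ)) * a u := by
  have hint := integrable_mul_comp_add hk.integrable h0 hC hmono (y + δ)
  calc a y * Real.exp (-(2 * δ)) * ∫ x in Ioc (-δ) δ, k x
    _ = ∫ x in Ioc (-δ) δ, k x * (a y * Real.exp (-(2 * δ))) := by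
        rw [integral_mul_const, mul_comm]
    _ ≤ ∫ x in Ioc (-δ) δ, k x * a (x + (y + δ)) := by
        refine setIntegral_mono_on (hk.integrable.mul_const _).integrableOn hint.integrableOn
          measurableSet_Ioc fun x ⟨hx₁, hx₂⟩ ↦ mul_le_mul_of_nonneg_left ?_ (hk.nonneg x)
        rw [Real.exp_neg, ← div_eq_mul_inv, div_le_iff₀ (Real.exp_pos _)]
        refine (le_mul_exp_sub_of_monotone_mul_exp hmono
          (by linarith : y ≤ x + (y + δ))).trans ?_
        gcongr
        · exact h0 _
        · linarith
    _ ≤ ∫ x, k x * a (x + (y + δ)) :=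
        setIntegral_le_integral hint (ae_of_all _ fun x ↦ mul_nonneg (hk.nonneg x) (h0 _))
    _ = ∫ u, k (u - (y + δ)) * a u := (integral_comp_sub_mul_eq k a _).symm

lemma integral_le_mul_exp_mul_add (hk : IsBandlimitedKernel k) (h0 : ∀ u, 0 ≤ a u)
    (hC : ∀ u, a u ≤ C) (hmono : Monotone fun u ↦ a u * Real.exp u) (δ y : ℝ) :
    ∫ u, k (u - (y - δ)) * a u ≤ a y * Real.exp (2 * δ) * (∫ x in Ioc (-δ) δ, k x) +
      C * (1 - ∫ x in Ioc (-δ) δ, k x) := by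
  have hint := integrable_mul_comp_add hk.integrable h0 hC hmono (y - δ)
  calc ∫ u, k (u - (y - δ)) * a u
    _ = (∫ x in Ioc (-δ) δ, k x * a (x + (y - δ))) +
          ∫ x in (Ioc (-δ) δ)ᶜ, k x * a (x + (y - δ)) := by
        rw [integral_comp_sub_mul_eq, integral_add_compl measurableSet_Ioc hint]
    _ ≤ (∫ x in Ioc (-δ) δ, k x * (a y * Real.exp (2 * δ))) +
          ∫ x in (Ioc (-δ) δ)ᶜ, k x * C := by
        refine add_le_add ?_ ?_
        · refine setIntegral_mono_on hint.integrableOn (hk.integrable.mul_const _).integrableOn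
            measurableSet_Ioc fun x ⟨hx₁, hx₂⟩ ↦ mul_le_mul_of_nonneg_left ?_ (hk.nonneg x)
          refine (le_mul_exp_sub_of_monotone_mul_exp hmono
            (by linarith : x + (y - δ) ≤ y)).trans ?_
          gcongr
          · exact h0 _
          · linarith
        · exact setIntegral_mono hint.integrableOn (hk.integrable.mul_const _).integrableOn
            fun x ↦ mul_le_mul_of_nonneg_left (hC _) (hk.nonneg x)
    _ = _ := by
        rw [integral_mul_const, integral_mul_const, setIntegral_compl measurableSet_Ioc
          hk.integrable, hk.integral_eq_one, mul_comm, mul_comm C]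

end IsBandlimitedKernel

lemma eventually_bounds_of_tendsto_integral_kernel_mul (h0 : ∀ u, 0 ≤ a u) (hC : ∀ u, a u ≤ C)
    (hmono : Monotone fun u ↦ a u * Real.exp u)
    (hlim : ∀ k, IsBandlimitedKernel k → Tendsto (fun y ↦ ∫ u, k (u - y) * a u) atTop (𝓝 A))
    {δ : ℝ} (hδ : 0 < δ) :
    ∀ᶠ y in atTop, a y * Real.exp (-(2 * δ)) * (1 - δ) ≤ A + δ ∧
      A - δ ≤ a y * Real.exp (2 * δ) + C * δ := by
  obtain ⟨k, hk, hmass⟩ := IsBandlimitedKernel.exists_concentrated hδ hδ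
  have hmass_le : ∫ x in Ioc (-δ) δ, k x ≤ 1 :=
    hk.integral_eq_one ▸ setIntegral_le_integral hk.integrable (ae_of_all _ hk.nonneg)
  have hright := (hlim k hk).comp (tendsto_atTop_add_const_right atTop δ tendsto_id)
  have hleft := (hlim k hk).comp (tendsto_atTop_add_const_right atTop (-δ) tendsto_id)
  filter_upwards [hright.eventually_le_const (lt_add_of_pos_right A hδ),
    hleft.eventually_const_le (sub_lt_self A hδ)] with y hle hge
  have := h0 y
  have hC0 : 0 ≤ C := this.trans (hC y)
  constructor
  · refine le_trans ?_ ((hk.mul_exp_mul_le_integral h0 hC hmono δ y).trans hle)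
    gcongr
  · refine (hge.trans (hk.integral_le_mul_exp_mul_add h0 hC hmono δ y)).trans ?_
    refine add_le_add (mul_le_of_le_one_right (by positivity) hmass_le) ?_
    gcongr
    linarith

theorem tendsto_of_tendsto_integral_kernel_mul (h0 : ∀ u, 0 ≤ a u) (hC : ∀ u, a u ≤ C)
    (hmono : Monotone fun u ↦ a u * Real.exp u)
    (hlim : ∀ k, IsBandlimitedKernel k → Tendsto (fun y ↦ ∫ u, k (u - y) * a u) atTop (𝓝 A)) :
    Tendsto a atTop (𝓝 A) := by
  have hbounds {δ : ℝ} (hδ : 0 < δ) :=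
    eventually_bounds_of_tendsto_integral_kernel_mul h0 hC hmono hlim hδ
  refine tendsto_order.2 ⟨fun B hB ↦ ?_, fun B hB ↦ ?_⟩
  · have hsmall : Tendsto (fun δ ↦ B * Real.exp (2 * δ) + C * δ + δ) (𝓝[>] 0) (𝓝 B) :=
      tendsto_nhdsWithin_of_tendsto_nhds <| Continuous.tendsto' (by fun_prop) _ _ (by simp)
    obtain ⟨δ, hδB, hδ⟩ := ((hsmall.eventually_lt_const hB).and self_mem_nhdsWithin).exists
    filter_upwards [hbounds hδ] with y hy
    refine lt_of_mul_lt_mul_right ?_ (Real.exp_nonneg (2 * δ))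
    linarith [hy.2]
  · have hsmall : Tendsto (fun δ ↦ B * Real.exp (-(2 * δ)) * (1 - δ) - δ) (𝓝[>] 0) (𝓝 B) :=
      tendsto_nhdsWithin_of_tendsto_nhds <| Continuous.tendsto' (by fun_prop) _ _ (by simp)
    obtain ⟨δ, hδB, hδ⟩ := ((hsmall.eventually_const_lt hB).and
      (Ioo_mem_nhdsGT zero_lt_one)).exists
    filter_upwards [hbounds hδ.1] with y hy
    have hpos : 0 ≤ Real.exp (-(2 * δ)) * (1 - δ) :=
      mul_nonneg (Real.exp_nonneg _) (sub_nonneg.2 hδ.2.le)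
    refine lt_of_mul_lt_mul_right ?_ hpos
    linarith [hy.1]

lemma tendsto_integral_Ioi_comp_sub {k : ℝ → ℝ} (hk : Integrable k) :
    Tendsto (fun y ↦ ∫ u in Ioi 0, k (u - y)) atTop (𝓝 (∫ x, k x)) := by
  refine ((aecover_Ioi tendsto_neg_atTop_atBot).integral_tendsto_of_countably_generated
    hk).congr fun y ↦ ?_
  simp_rw [← integral_indicator measurableSet_Ioi]
  rw [← integral_sub_right_eq_self _ y]
  congr with u
  simp [indicator]

theorem tendsto_of_continuousOn_laplace (h0 : ∀ u, 0 ≤ a u) (hC : ∀ u, a u ≤ C)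
    (hmono : Monotone fun u ↦ a u * Real.exp u) (hneg : ∀ u < 0, a u = 0) {G : ℂ → ℂ}
    (hG : ContinuousOn G {z | 0 ≤ z.re})
    (hL : ∀ z : ℂ, 0 < z.re →
      ∫ u in Ioi (0 : ℝ), ((a u - A : ℝ) : ℂ) * Complex.exp (-z * u) = G z) :
    Tendsto a atTop (𝓝 A) := by
  refine tendsto_of_tendsto_integral_kernel_mul h0 hC hmono fun k hk ↦ ?_
  obtain ⟨φ, hφ, hsupp, hφk⟩ := hk.exists_fourier_eq
  have ha : Measurable a := measurable_of_monotone_mul_exp hmono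
  have hbound (u : ℝ) : ‖a u - A‖ ≤ C + ‖A‖ := by
    refine (norm_sub_le _ _).trans ?_
    gcongr
    rw [Real.norm_of_nonneg (h0 u)]
    exact hC u
  have hosc : Tendsto (fun y ↦ ∫ u in Ioi 0, k (u - y) * (a u - A)) atTop (𝓝 0) := by
    have := tendsto_integral_fourier_sub_mul (b := fun u ↦ ((a u - A : ℝ) : ℂ)) (by fun_prop)
      (fun u ↦ (Complex.norm_real _).trans_le (hbound u)) hG hL hφ hsupp
      (funext hφk ▸ hk.integrable.ofReal)
    simp only [hφk, ← Complex.ofReal_mul, integral_complex_ofReal] at this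
    exact (tendsto_ofReal_iff' (𝕜 := ℂ)).1 (by simpa using! this)
  have hmain := (tendsto_integral_Ioi_comp_sub hk.integrable).const_mul A
  rw [hk.integral_eq_one, mul_one] at hmain
  simpa using (hosc.add hmain).congr fun y ↦ calc
    (∫ u in Ioi 0, k (u - y) * (a u - A)) + A * ∫ u in Ioi 0, k (u - y)
      = ∫ u in Ioi 0, k (u - y) * a u := by
        have hint := hk.integrable.comp_sub_right y
        rw [← integral_const_mul, ← integral_add]
        · congr with u; ring
        · exact (hint.mul_bdd (by fun_prop) (ae_of_all _ hbound)).integrableOn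
        · exact (hint.const_mul A).integrableOn
    _ = ∫ u, k (u - y) * a u := by
        rw [← integral_Ici_eq_integral_Ioi]
        refine setIntegral_eq_integral_of_forall_compl_eq_zero fun u hu ↦ ?_
        rw [hneg u (not_le.1 hu), mul_zero]

end Tauberian

section DirichletSeries

open Finset (Icc)

/-- The summatory function `x ↦ ∑_{1 ≤ n ≤ x} f n` of an arithmetic function. -/
noncomputable def summatory (f : ℕ → ℝ) (x : ℝ) : ℝ :=
  ∑ n ∈ Icc 1 ⌊x⌋₊, f n

variable {f : ℕ → ℝ}

lemma summatory_nonneg (hf : ∀ n, 0 ≤ f n) (x : ℝ) : 0 ≤ summatory f x :=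
  Finset.sum_nonneg fun n _ ↦ hf n

lemma summatory_mono (hf : ∀ n, 0 ≤ f n) : Monotone (summatory f) := fun _ _ hxy ↦
  Finset.sum_le_sum_of_subset_of_nonneg (Finset.Icc_subset_Icc_right (Nat.floor_mono hxy))
    fun n _ _ ↦ hf n

lemma summatory_of_lt_one {x : ℝ} (hx : x < 1) : summatory f x = 0 := by
  rw [summatory, Nat.floor_eq_zero.2 hx]
  simp

lemma exists_summatory_le_mul
    (hO : (fun n ↦ ∑ k ∈ Icc 1 n, f k) =O[atTop] fun n : ℕ ↦ (n : ℝ)) :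
    ∃ C, 0 < C ∧ ∀ x, 0 ≤ x → summatory f x ≤ C * x := by
  obtain ⟨C, hC, hle⟩ := Asymptotics.bound_of_isBigO_nat_atTop hO
  refine ⟨C, hC, fun x hx ↦ ?_⟩
  obtain hx1 | hx1 := lt_or_ge x 1
  · rw [summatory_of_lt_one hx1]
    positivity
  · have hfloor : (⌊x⌋₊ : ℝ) ≠ 0 := Nat.cast_ne_zero.2 (Nat.floor_pos.2 hx1).ne'
    calc summatory f x ≤ ‖summatory f x‖ := Real.le_norm_self _
      _ ≤ C * ‖(⌊x⌋₊ : ℝ)‖ := hle hfloor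
      _ ≤ C * x := by
        rw [Real.norm_natCast]
        gcongr
        exact Nat.floor_le hx

lemma LSeries_one_add_eq_mul_integral (hf : ∀ n, 0 ≤ f n)
    (hO : (fun n ↦ ∑ k ∈ Icc 1 n, f k) =O[atTop] fun n : ℕ ↦ (n : ℝ)) {z : ℂ} (hz : 0 < z.re) :
    LSeries (fun n ↦ f n) (1 + z) = (1 + z) * ∫ u in Ioi (0 : ℝ),
      ((summatory f (Real.exp u) * Real.exp (-u) : ℝ) : ℂ) * Complex.exp (-z * u) := by
  rw [LSeries_eq_mul_integral_of_nonneg f zero_le_one (by simpa) (by simpa using hO) hf,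
    ← Real.exp_zero, ← integral_comp_exp_Ioi]
  congr 1
  refine integral_congr_ae <| .of_forall fun u ↦ ?_
  have hpow : (Real.exp u : ℂ) ^ (-(1 + z + 1)) =
      Complex.exp (-u) * Complex.exp (-u) * Complex.exp (-z * u) := by
    rw [Complex.cpow_def_of_ne_zero (by simp [Complex.exp_ne_zero]), ← Complex.ofReal_log
      (Real.exp_nonneg u), Real.log_exp, ← Complex.exp_add, ← Complex.exp_add]
    ring_nf
  have hcancel : Complex.exp u * Complex.exp (-u) = 1 := by rw [← Complex.exp_add]; simp
  simp only [summatory, hpow, Complex.real_smul]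
  push_cast
  linear_combination (∑ n ∈ Icc 1 ⌊Real.exp u⌋₊, (f n : ℂ)) *
    (Complex.exp (-u) * Complex.exp (-z * u)) * hcancel

lemma integral_Ioi_sub_const_mul_exp_neg {a : ℝ → ℝ} {C : ℝ} (ha : Measurable a)
    (hC : ∀ u, ‖a u‖ ≤ C) (A : ℝ) {z : ℂ} (hz : 0 < z.re) :
    ∫ u in Ioi (0 : ℝ), ((a u - A : ℝ) : ℂ) * Complex.exp (-z * u) =
      (∫ u in Ioi (0 : ℝ), (a u : ℂ) * Complex.exp (-z * u)) - A / z := by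
  have hz' : (-z).re < 0 := by simpa
  have hexp := integrableOn_exp_mul_complex_Ioi hz' 0
  simp only [Complex.ofReal_sub, sub_mul]
  rw [integral_sub _ (hexp.const_mul _), integral_const_mul, integral_exp_mul_complex_Ioi hz']
  · simp [div_eq_mul_inv]
  · exact hexp.bdd_mul (c := C) (by fun_prop) (ae_of_all _ fun u ↦ by simpa using hC u)

lemma one_add_ne_zero_of_re_nonneg {z : ℂ} (hz : 0 ≤ z.re) : 1 + z ≠ 0 := fun h ↦ by
  have := congrArg Complex.re h
  simp only [Complex.add_re, Complex.one_re, Complex.zero_re] at this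
  linarith

theorem wiener_ikehara (hf : ∀ n, 0 ≤ f n)
    (hO : (fun n ↦ ∑ k ∈ Icc 1 n, f k) =O[atTop] fun n : ℕ ↦ (n : ℝ)) {A : ℝ} {F : ℂ → ℂ}
    (hF : ContinuousOn F {s | 1 ≤ s.re})
    (hFL : EqOn F (fun s ↦ LSeries (fun n ↦ f n) s - A / (s - 1)) {s | 1 < s.re}) :
    Tendsto (fun x ↦ summatory f x / x) atTop (𝓝 A) := by
  obtain ⟨C, hC0, hC⟩ := exists_summatory_le_mul hO
  let a (u : ℝ) : ℝ := summatory f (Real.exp u) * Real.exp (-u)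
  have h0 (u : ℝ) : 0 ≤ a u := mul_nonneg (summatory_nonneg hf _) (Real.exp_nonneg _)
  have haC (u : ℝ) : a u ≤ C := by
    simp only [a, Real.exp_neg, ← div_eq_mul_inv]
    exact div_le_of_le_mul₀ (Real.exp_nonneg u) hC0.le (hC _ (Real.exp_nonneg u))
  have hmono : Monotone fun u ↦ a u * Real.exp u := by
    simpa [a, mul_assoc, ← Real.exp_add, Function.comp_def] using
      (summatory_mono hf).comp Real.exp_monotone
  have hneg (u : ℝ) (hu : u < 0) : a u = 0 := by
    simp only [a, summatory_of_lt_one (Real.exp_lt_one_iff.2 hu), zero_mul]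
  have hG : ContinuousOn (fun z ↦ (F (1 + z) - A) / (1 + z)) {z | 0 ≤ z.re} :=
    ((hF.comp (by fun_prop) fun z hz ↦ by simpa using hz).sub continuousOn_const).div
      (by fun_prop) fun z hz ↦ one_add_ne_zero_of_re_nonneg hz
  have hlim : Tendsto a atTop (𝓝 A) := by
    refine tendsto_of_continuousOn_laplace h0 haC hmono hneg hG fun z hz ↦ ?_
    have hz0 : z ≠ 0 := fun h ↦ by simp [h] at hz
    have hFz : F (1 + z) = (1 + z) * (∫ u in Ioi (0 : ℝ), (a u : ℂ) * Complex.exp (-z * u)) -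
        A / z := by
      rw [← LSeries_one_add_eq_mul_integral hf hO hz]
      simpa using hFL (x := 1 + z) (by simpa using hz)
    rw [integral_Ioi_sub_const_mul_exp_neg (measurable_of_monotone_mul_exp hmono)
      (fun u ↦ (Real.norm_of_nonneg (h0 u)).trans_le (haC u)) A hz, hFz]
    field_simp [one_add_ne_zero_of_re_nonneg hz.le]
    ring
  refine (hlim.comp Real.tendsto_log_atTop).congr' ?_
  filter_upwards [eventually_gt_atTop 0] with x hx
  simp only [a, Function.comp_apply, Real.exp_neg, Real.exp_log hx, div_eq_mul_inv]

end DirichletSeries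

section PrimeNumberTheorem

open ArithmeticFunction.vonMangoldt

theorem tendsto_summatory_residueClass_div {q : ℕ} [NeZero q] {a : ZMod q} (ha : IsUnit a) :
    Tendsto (fun x ↦ summatory (residueClass a) x / x) atTop (𝓝 (q.totient : ℝ)⁻¹) := by
  have hO : (fun n ↦ ∑ k ∈ Finset.Icc 1 n, residueClass a k) =O[atTop] fun n : ℕ ↦ (n : ℝ) := by
    refine Asymptotics.IsBigO.of_bound (Real.log 4 + 4) (.of_forall fun n ↦ ?_)
    rw [Real.norm_of_nonneg (Finset.sum_nonneg fun k _ ↦ residueClass_nonneg a k),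
      Real.norm_natCast]
    calc ∑ k ∈ Finset.Icc 1 n, residueClass a k
        ≤ ∑ k ∈ Finset.Icc 1 n, ArithmeticFunction.vonMangoldt k :=
          Finset.sum_le_sum fun k _ ↦ residueClass_le a k
      _ = Chebyshev.psi n := by rw [Chebyshev.psi, Nat.floor_natCast]; rfl
      _ ≤ (Real.log 4 + 4) * n := Chebyshev.psi_le_const_mul_self n.cast_nonneg
  refine wiener_ikehara (residueClass_nonneg a) hO (continuousOn_LFunctionResidueClassAux a) ?_
  simpa using eqOn_LFunctionResidueClassAux ha

theorem tendsto_psi_div : Tendsto (fun x ↦ Chebyshev.psi x / x) atTop (𝓝 1) := by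
  have hΛ : residueClass (1 : ZMod 1) = ArithmeticFunction.vonMangoldt := by
    ext n
    simp [residueClass, Subsingleton.elim _ (1 : ZMod 1)]
  have := tendsto_summatory_residueClass_div (q := 1) isUnit_one
  simpa only [hΛ, Nat.totient_one, Nat.cast_one, inv_one] using! this

theorem tendsto_theta_div : Tendsto (fun x ↦ Chebyshev.theta x / x) atTop (𝓝 1) := by
  have hsqrt : Real.sqrt =o[atTop] (id : ℝ → ℝ) := by
    refine (Asymptotics.isLittleO_iff_tendsto' ?_).2 ?_
    · filter_upwards [eventually_ne_atTop 0] with x hx h using absurd h hx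
    · simp only [id, Real.sqrt_div_self']
      exact tendsto_const_nhds.div_atTop Real.tendsto_sqrt_atTop
  have hdiff := (Chebyshev.isBigO_psi_sub_theta_sqrt.trans_isLittleO hsqrt).tendsto_div_nhds_zero
  simpa [sub_div] using tendsto_psi_div.sub hdiff

end PrimeNumberTheorem

end WienerIkehara

section PrimeSums

open Filter Topology Finset Nat Chebyshev
open scoped Nat.Prime

theorem tendsto_primeCounting_mul_log_div :
    Tendsto (fun x : ℝ ↦ π ⌊x⌋₊ * Real.log x / x) atTop (𝓝 1) := by
  have hlog : Tendsto (fun x ↦ (Real.log x)⁻¹) atTop (𝓝 0) :=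
    Real.tendsto_log_atTop.inv_tendsto_atTop
  have hdiff : (fun x ↦ (π ⌊x⌋₊ - θ x / Real.log x) * (Real.log x / x)) =O[atTop]
      fun x ↦ (Real.log x)⁻¹ := by
    refine (primeCounting_sub_theta_div_log_isBigO.mul
      (Asymptotics.isBigO_refl (fun x ↦ Real.log x / x) _)).congr' .rfl ?_
    filter_upwards [eventually_gt_atTop 1] with x hx
    have := Real.log_pos hx
    field
  refine (zero_add (1 : ℝ) ▸ (hdiff.trans_tendsto hlog).add tendsto_theta_div).congr' ?_
  filter_upwards [eventually_gt_atTop 1] with x hx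
  have := Real.log_pos hx
  field

lemma tendsto_sum_range_natCast_div_sq :
    Tendsto (fun n : ℕ ↦ (∑ k ∈ range n, (k : ℝ)) / n ^ 2) atTop (𝓝 2⁻¹) := by
  have hlim : Tendsto (fun n : ℕ ↦ (2 : ℝ)⁻¹ * (1 - 1 / n)) atTop (𝓝 2⁻¹) := by
    simpa using (tendsto_one_div_atTop_nhds_zero_nat.const_sub (1 : ℝ)).const_mul 2⁻¹
  refine hlim.congr' ?_
  filter_upwards [eventually_gt_atTop 0] with n hn
  have hgauss := congrArg (Nat.cast (R := ℝ)) (sum_range_id_mul_two n)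
  push_cast [Nat.cast_sub (Nat.one_le_of_lt hn)] at hgauss
  field_simp
  linear_combination -hgauss

lemma tendsto_sum_range_div_sq {f : ℕ → ℝ} {A : ℝ}
    (hf : Tendsto (fun k : ℕ ↦ f k / k) atTop (𝓝 A)) :
    Tendsto (fun n : ℕ ↦ (∑ k ∈ range n, f k) / n ^ 2) atTop (𝓝 (A / 2)) := by
  have hgauss := tendsto_sum_range_natCast_div_sq
  have hsum : Tendsto (fun n : ℕ ↦ ∑ k ∈ range n, (k : ℝ)) atTop atTop := by
    refine (hgauss.pos_mul_atTop (by positivity)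
      ((tendsto_pow_atTop two_ne_zero).comp tendsto_natCast_atTop_atTop)).congr' ?_
    filter_upwards [eventually_gt_atTop 0] with n hn
    simp only [Function.comp_apply]
    field
  have hsub : (fun k ↦ f k - A * k) =o[atTop] fun k : ℕ ↦ (k : ℝ) := by
    refine (Asymptotics.isLittleO_iff_tendsto' ?_).2 ((sub_self A ▸ hf.sub_const A).congr' ?_) <;>
      filter_upwards [eventually_gt_atTop 0] with k hk
    · exact fun h ↦ absurd h (by positivity)
    · field
  have hrest := (hsub.sum_range (fun k ↦ k.cast_nonneg) hsum).tendsto_div_nhds_zero.mul hgauss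
  have hlim : Tendsto (fun n : ℕ ↦ A * ((∑ k ∈ range n, (k : ℝ)) / n ^ 2) +
      (∑ k ∈ range n, (f k - A * k)) / (∑ k ∈ range n, (k : ℝ)) *
        ((∑ k ∈ range n, (k : ℝ)) / n ^ 2)) atTop (𝓝 (A / 2)) := by
    simpa [div_eq_mul_inv] using (hgauss.const_mul A).add hrest
  refine hlim.congr' ?_
  filter_upwards [hsum.eventually_ne_atTop 0] with n hn
  rw [sum_sub_distrib, ← mul_sum]
  field

lemma sum_primesLE_add_one_add_sum_primeCounting (n : ℕ) :
    ∑ p ∈ primesLE n, (p + 1) + ∑ k ∈ range n, π k = (n + 1) * π n := by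
  induction n with
  | zero => simp
  | succ n ih =>
    rw [sum_range_succ, ← primesLE_card_eq_primeCounting (n + 1), primesLE_succ]
    split_ifs with h
    · rw [sum_insert (by simp [mem_primesLE]), card_insert_of_notMem (by simp [mem_primesLE]),
        primesLE_card_eq_primeCounting]
      linear_combination ih
    · rw [primesLE_card_eq_primeCounting]
      linear_combination ih

lemma sum_primesLE_add_one_mul_log_le (n : ℕ) :
    (∑ p ∈ primesLE n, (p + 1) : ℕ) * Real.log n ≤
      (n + 1) * (π n * Real.log n) - ∑ k ∈ range n, θ k := by
  have hθ : ∑ k ∈ range n, θ k ≤ (∑ k ∈ range n, π k : ℕ) * Real.log n := by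
    rw [Nat.cast_sum, sum_mul]
    refine sum_le_sum fun k hk ↦ (theta_le_pi_mul_log k).trans ?_
    obtain rfl | hk0 := k.eq_zero_or_pos
    · simp
    · gcongr
      exact (mem_range.1 hk).le
  have hsum := congrArg (Nat.cast (R := ℝ)) (sum_primesLE_add_one_add_sum_primeCounting n)
  push_cast at hsum hθ ⊢
  linear_combination hθ + Real.log n * hsum

theorem eventually_sum_primesLE_add_one_mul_log_le {c : ℝ} (hc : 1 / 2 < c) :
    ∀ᶠ n : ℕ in atTop, (∑ p ∈ primesLE n, (p + 1) : ℕ) * Real.log n ≤ c * n ^ 2 := by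
  have hπ : Tendsto (fun n : ℕ ↦ (1 + 1 / n) * (π n * Real.log n / n)) atTop (𝓝 1) := by
    simpa using (tendsto_one_div_atTop_nhds_zero_nat.const_add 1).mul
      (tendsto_primeCounting_mul_log_div.comp tendsto_natCast_atTop_atTop)
  have hθ := tendsto_sum_range_div_sq (tendsto_theta_div.comp tendsto_natCast_atTop_atTop)
  have hlim := (hπ.sub hθ).eventually_lt_const (show 1 - 1 / 2 < c by linarith)
  filter_upwards [hlim, eventually_gt_atTop 0] with n hn hn0
  refine (sum_primesLE_add_one_mul_log_le n).trans ?_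
  rw [← div_le_iff₀ (by positivity)]
  refine le_of_eq_of_le ?_ hn.le
  field

lemma tendsto_sqrt_mul_log_atTop : Tendsto (fun x ↦ √(x * Real.log x)) atTop atTop :=
  Real.tendsto_sqrt_atTop.comp (tendsto_id.atTop_mul_atTop₀ Real.tendsto_log_atTop)

lemma eventually_sqrt_le_floor_mul_sqrt_mul_log {c : ℝ} (hc : 0 < c) :
    ∀ᶠ x : ℝ in atTop, √x ≤ ⌊c * √(x * Real.log x)⌋₊ := by
  have hlog : Tendsto (fun x ↦ c * √(Real.log x)) atTop atTop :=
    (Real.tendsto_sqrt_atTop.comp Real.tendsto_log_atTop).const_mul_atTop hc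
  filter_upwards [hlog.eventually_ge_atTop 2, eventually_ge_atTop 1] with x hlogx hx
  calc √x ≤ √x * 2 - 1 := by linarith [Real.one_le_sqrt.2 hx]
    _ ≤ √x * (c * √(Real.log x)) - 1 := by gcongr
    _ = c * √(x * Real.log x) - 1 := by rw [Real.sqrt_mul (by positivity)]; ring
    _ ≤ ⌊c * √(x * Real.log x)⌋₊ := (Nat.sub_one_lt_floor _).le

theorem eventually_sum_primesLE_add_one_le {c : ℝ} (hc0 : 0 < c) (hc1 : c < 1) :
    ∀ᶠ x : ℝ in atTop, (∑ p ∈ primesLE ⌊c * √(x * Real.log x)⌋₊, (p + 1) : ℕ) ≤ x := by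
  have hK : 1 / 2 < (2 * c ^ 2)⁻¹ := by
    rw [one_div]; gcongr; nlinarith
  have hfloor : Tendsto (fun x ↦ ⌊c * √(x * Real.log x)⌋₊) atTop atTop :=
    tendsto_nat_floor_atTop.comp (tendsto_sqrt_mul_log_atTop.const_mul_atTop hc0)
  filter_upwards [eventually_sqrt_le_floor_mul_sqrt_mul_log hc0, eventually_gt_atTop 1,
    hfloor.eventually (eventually_sum_primesLE_add_one_mul_log_le hK)] with x hsqrt hx hsum
  set N := ⌊c * √(x * Real.log x)⌋₊
  have hlogx : 0 < Real.log x := Real.log_pos hx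
  have hlogN : Real.log x / 2 ≤ Real.log N := by
    rw [← Real.log_sqrt (by positivity)]
    exact Real.log_le_log (by positivity) hsqrt
  have hN : (N : ℝ) ≤ c * √(x * Real.log x) := Nat.floor_le (by positivity)
  refine le_of_mul_le_mul_right ?_ (hlogx.trans_le (by linarith : _ ≤ 2 * Real.log N))
  calc (∑ p ∈ primesLE N, (p + 1) : ℕ) * (2 * Real.log N)
    _ ≤ 2 * ((2 * c ^ 2)⁻¹ * N ^ 2) := by linarith
    _ ≤ 2 * ((2 * c ^ 2)⁻¹ * (c * √(x * Real.log x)) ^ 2) := by gcongr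
    _ = x * Real.log x := by
      rw [mul_pow, Real.sq_sqrt (by positivity)]
      field
    _ ≤ x * (2 * Real.log N) := by gcongr; linarith

theorem eventually_exp_mul_le_primorial {b c : ℝ} (hc : 0 < c) (hbc : b < c) :
    ∀ᶠ x : ℝ in atTop, Real.exp (b * x) ≤ primorial ⌊c * x⌋₊ := by
  have hθ := (tendsto_theta_div.comp (tendsto_id.const_mul_atTop hc)).eventually_const_lt
    ((div_lt_one hc).2 hbc)
  filter_upwards [hθ, eventually_gt_atTop 0] with x hx hx0
  simp only [Function.comp_apply, id] at hx
  rw [← Real.le_log_iff_exp_le (mod_cast primorial_pos _), ← theta_eq_log_primorial]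
  calc b * x = b / c * (c * x) := by field
    _ ≤ θ (c * x) := ((lt_div_iff₀ (by positivity)).1 hx).le

theorem exists_dfa_primorial_le_sInf_isUnivLength {N n : ℕ} (hN : 2 ≤ N)
    (hn : ∑ p ∈ primesLE N, (p + 1) ≤ n) :
    ∃ (Q : Type) (inst : Fintype Q), @Fintype.card Q inst = n ∧
      ∃ M : DFA Bool Q, (∃ ℓ, IsUnivLength M.accepts ℓ) ∧
        primorial N ≤ sInf {ℓ | IsUnivLength M.accepts ℓ} := by
  have hprime {p : ℕ} (hp : p ∈ primesLE N) : p.Prime := (mem_primesLE.1 hp).2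
  exact exists_dfa_finsetProd_le_sInf_isUnivLength ⟨2, mem_primesLE.2 ⟨hN, Nat.prime_two⟩⟩
    (fun h ↦ Nat.not_prime_zero (hprime h))
    (fun _ hp _ hq hne ↦ (Nat.coprime_primes (hprime hp) (hprime hq)).2 hne) hn

end PrimeSums

/-- Asymptotic lower bound: for every `ε > 0` and all sufficiently large `n` there is an
`n`-state DFA over a two-letter alphabet having a universal length, whose minimal universality
length is at least `exp ((1 - ε) * √(n * log n))`. -/
theorem dfa_min_univ_length_lower_bound :
    ∀ ε : ℝ, 0 < ε → ∃ N : ℕ, ∀ n : ℕ, N ≤ n →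
      ∃ (Q : Type) (inst : Fintype Q), @Fintype.card Q inst = n ∧
        ∃ M : DFA Bool Q,
          (∃ ℓ : ℕ, IsUnivLength M.accepts ℓ) ∧
          Real.exp ((1 - ε) * Real.sqrt ((n : ℝ) * Real.log (n : ℝ))) ≤
            ((sInf {ℓ : ℕ | IsUnivLength M.accepts ℓ} : ℕ) : ℝ) := by
  intro ε hε
  obtain ⟨c, hc, hc1⟩ := exists_between (max_lt (sub_lt_self 1 hε) one_pos)
  obtain ⟨hεc, hc0⟩ := max_lt_iff.1 hc
  have hcast := tendsto_natCast_atTop_atTop (R := ℝ)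
  have hr := tendsto_sqrt_mul_log_atTop.comp hcast
  have hfloor := tendsto_nat_floor_atTop.comp (hr.const_mul_atTop hc0)
  refine Filter.eventually_atTop.1 ?_
  filter_upwards [hcast.eventually (eventually_sum_primesLE_add_one_le hc0 hc1),
    hr.eventually (eventually_exp_mul_le_primorial hc0 hεc), hfloor.eventually_ge_atTop 2]
    with n hsum hexp htwo
  obtain ⟨Q, inst, hcard, M, hM, hle⟩ :=
    exists_dfa_primorial_le_sInf_isUnivLength htwo (mod_cast hsum)
  exact ⟨Q, inst, hcard, M, hM, hexp.trans (mod_cast hle)⟩
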